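/- Let k ≥ 6 be an integer and let α, β ∈ {0,1,…,k}. There exists a k-L(2,1)-labelling L of the gadget G_k with L(u) = L(v) = k, L(a_u) = α and L(a_v) = β if and only if (α,β) ∈ {(2,0), (0,2), (k−2,0), (0,k−2)}. -/

import Mathlib

/-- For an integer `k`, a `k`-L(2,1)-labelling of a graph `G` is a map from the vertices
to `{0,1,…,k}` such that labels of adjacent vertices differ by at least `2` and vertices
at distance exactly `2` get distinct labels. -/
def IsL21Labelling {V : Type*} (G : SimpleGraph V) (k : ℕ) (L : V → ℕ) : Prop :=
  (∀ v, L v ≤ k) ∧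
  (∀ x y, G.Adj x y → 2 ≤ |(L x : ℤ) - (L y : ℤ)|) ∧
  (∀ x y, G.dist x y = 2 → L x ≠ L y)

/-- The vertices of the graph `H'` for a given `k`:
`c, d, e, f₁, …, f_{k-3}, g, h, i`. -/
inductive HpV (k : ℕ) | c | d | e | f (j : Fin (k - 3)) | g | h | i
deriving DecidableEq

/-- The adjacency generating relation of `H'`: edges `cd`, `de`, `gh`, `gi`,
and `d fⱼ`, `g fⱼ` for every `j`. -/
def HpAdj (k : ℕ) : HpV k → HpV k → Prop := fun x y =>
  (x = HpV.c ∧ y = HpV.d) ∨ (x = HpV.d ∧ y = HpV.e) ∨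
  (x = HpV.g ∧ y = HpV.h) ∨ (x = HpV.g ∧ y = HpV.i) ∨
  (∃ j, (x = HpV.d ∧ y = HpV.f j) ∨ (x = HpV.g ∧ y = HpV.f j))

/-- The vertices of the gadget `G_k` (for `k ≥ 6`): the path `u, a_u, a_v, v`,
the vertices `b₁, …, b_{k-5}`, and for each `i` two copies (indexed by `Bool`)
of the graph `H'`. -/
inductive GkV (k : ℕ)
| u | au | av | v
| b (i : Fin (k - 5))
| hp (i : Fin (k - 5)) (s : Bool) (x : HpV k)

/-- The adjacency generating relation of the gadget `G_k` (for `k ≥ 6`):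
the path `u a_u`, `a_u a_v`, `a_v v`; each `bᵢ` joined to `a_u` and `a_v`;
the vertex `c` of each of the two copies of `H'` at `bᵢ` joined to `bᵢ`;
and the edges of `H'` inside each copy. -/
def GkAdj (k : ℕ) : GkV k → GkV k → Prop := fun x y =>
  (x = GkV.u ∧ y = GkV.au) ∨ (x = GkV.au ∧ y = GkV.av) ∨ (x = GkV.av ∧ y = GkV.v) ∨
  (∃ i, (x = GkV.au ∧ y = GkV.b i) ∨ (x = GkV.av ∧ y = GkV.b i)) ∨
  (∃ i s, x = GkV.b i ∧ y = GkV.hp i s HpV.c) ∨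
  (∃ i s x' y', x = GkV.hp i s x' ∧ y = GkV.hp i s y' ∧ HpAdj k x' y')

/-- The gadget `G_k` (for `k ≥ 6`). -/
def Gk (k : ℕ) : SimpleGraph (GkV k) := SimpleGraph.fromRel (GkAdj k)

lemma l21_iff {V : Type*} (G : SimpleGraph V) (k : ℕ) (L : V → ℕ) :
    IsL21Labelling G k L ↔ (∀ v, L v ≤ k) ∧
      (∀ x y, G.Adj x y → L x + 2 ≤ L y ∨ L y + 2 ≤ L x) ∧
      (∀ x z y, G.Adj z x → G.Adj z y → x ≠ y → L x ≠ L y) := by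
  have key : ∀ a b : ℕ, 2 ≤ |(a : ℤ) - (b : ℤ)| ↔ (a + 2 ≤ b ∨ b + 2 ≤ a) := by
    intro a b
    rw [le_abs]
    omega
  unfold IsL21Labelling
  simp only [key]
  refine and_congr_right fun _ => and_congr_right fun h2 => ⟨?_, ?_⟩
  · intro h x z y hzx hzy hne
    by_cases hxy : G.Adj x y
    · have := h2 x y hxy
      omega
    · apply h
      have hw : G.dist x y ≤ 2 :=
        SimpleGraph.dist_le (SimpleGraph.Walk.cons hzx.symm (SimpleGraph.Walk.cons hzy .nil))
      have hr : G.Reachable x y :=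
        ⟨SimpleGraph.Walk.cons hzx.symm (SimpleGraph.Walk.cons hzy .nil)⟩
      have h0 : G.dist x y ≠ 0 := fun h0 => hne (hr.dist_eq_zero_iff.1 h0)
      have h1 : G.dist x y ≠ 1 := fun h1 => hxy (SimpleGraph.dist_eq_one_iff_adj.1 h1)
      omega
  · intro h x y hd
    have hr : G.Reachable x y := by
      by_contra hc
      rw [SimpleGraph.dist_eq_zero_of_not_reachable hc] at hd
      omega
    obtain ⟨p, hp⟩ := hr.exists_walk_length_eq_dist
    rw [hd] at hp
    have hne : x ≠ y := by
      rintro rfl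
      simp at hd
    match p, hp with
    | .cons h1 (.cons h2 .nil), _ => exact h _ _ _ h1.symm h2 hne

lemma pigeon {n : ℕ} (b : Fin n → ℕ) (hb : Function.Injective b) (T : Finset ℕ)
    (h : ∀ i, b i ∈ T) : n ≤ T.card := by
  have := Finset.card_le_card_of_injOn b (s := Finset.univ) (t := T) (fun i _ => h i)
    (hb.injOn)
  simpa using this

lemma pigeon_sdiff {n : ℕ} (b : Fin n → ℕ) (hb : Function.Injective b) (T R : Finset ℕ)
    (hR : R ⊆ T) (h : ∀ i, b i ∈ T) (h' : ∀ i, b i ∉ R) : n + R.card ≤ T.card := by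
  have := pigeon b hb (T \ R) (fun i => by simp [h i, h' i])
  rw [Finset.card_sdiff_of_subset hR] at this
  have := Finset.card_le_card hR
  omega

/-- A vertex of degree `k-1` has label `0` or `k`. -/
lemma hub {k : ℕ} (hk : 6 ≤ k) (f : Fin (k - 3) → ℕ) (hf : Function.Injective f) (p q x : ℕ)
    (hpq : p ≠ q) (hfp : ∀ j, f j ≠ p) (hfq : ∀ j, f j ≠ q) (hx : x ≤ k) (hp : p ≤ k)
    (hq : q ≤ k) (hfk : ∀ j, f j ≤ k) (hxp : x + 2 ≤ p ∨ p + 2 ≤ x)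
    (hxq : x + 2 ≤ q ∨ q + 2 ≤ x) (hxf : ∀ j, x + 2 ≤ f j ∨ f j + 2 ≤ x) :
    x = 0 ∨ x = k := by
  by_contra hc
  have := pigeon_sdiff f hf (Finset.Icc 0 k) ({p, q, x - 1, x, x + 1} : Finset ℕ)
    (by intro y; simp; omega) (by intro j; simpa using hfk j)
    (by intro j; have := hxf j; have := hfp j; have := hfq j; simp; omega)
  have h5 : ({p, q, x - 1, x, x + 1} : Finset ℕ).card = 5 := by
    repeat rw [Finset.card_insert_of_notMem (by simp; omega)]
    simp
  rw [h5] at this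
  simp at this
  omega

lemma mid {k : ℕ} (hk : 6 ≤ k) (f : Fin (k - 3) → ℕ) (hf : Function.Injective f) (p : ℕ)
    (hfp : ∀ j, f j ≠ p) (hf2 : ∀ j, 2 ≤ f j ∧ f j + 2 ≤ k) : p < 2 ∨ k < p + 2 := by
  by_contra hc
  have := pigeon_sdiff f hf (Finset.Icc 2 (k - 2)) ({p} : Finset ℕ)
    (by intro y; simp; omega) (by intro j; have := hf2 j; simp; omega)
    (by intro j; simpa using hfp j)
  simp at this
  omega

lemma core {k : ℕ} (hk : 6 ≤ k) (α β : ℕ) (b : Fin (k - 5) → ℕ) (hb : Function.Injective b)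
    (c : Fin (k - 5) → Bool → ℕ) (hαβ : α + 2 ≤ β) (hβ : β + 2 ≤ k)
    (hb1 : ∀ i, 1 ≤ b i ∧ b i + 1 ≤ k)
    (hbα : ∀ i, b i + 2 ≤ α ∨ α + 2 ≤ b i) (hbβ : ∀ i, b i + 2 ≤ β ∨ β + 2 ≤ b i)
    (hcc : ∀ i, c i false ≠ c i true)
    (hc : ∀ i s, c i s ≤ 1 ∨ k ≤ c i s + 1) (hck : ∀ i s, c i s ≤ k)
    (hcα : ∀ i s, c i s ≠ α) (hcb : ∀ i s, b i + 2 ≤ c i s ∨ c i s + 2 ≤ b i) :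
    α = 0 ∧ (β = 2 ∨ β + 2 = k) := by
  by_cases h0 : α = 0
  · refine ⟨h0, ?_⟩
    by_contra hn
    have := pigeon_sdiff b hb (Finset.Icc 2 (k - 2)) (Finset.Icc (β - 1) (β + 1))
      (by intro y; simp; omega)
      (by
        intro i
        have := hc i false; have := hc i true; have := hck i false; have := hck i true
        have := hcα i false; have := hcα i true; have := hcb i false; have := hcb i true
        have := hcc i; have := hb1 i; have := hbα i
        simp; omega)
      (by intro i; have := hbβ i; simp; omega)
    simp at this
    omega
  · exfalso
    by_cases h1 : α = 1
    · have hb3 : ∀ i, 3 ≤ b i ∧ b i + 2 ≤ k := by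
        intro i
        have := hc i false; have := hc i true; have := hck i false; have := hck i true
        have := hcα i false; have := hcα i true; have := hcb i false; have := hcb i true
        have := hcc i; have := hb1 i; have := hbα i
        omega
      have := pigeon_sdiff b hb (Finset.Icc 3 (k - 1)) ({β, β + 1, k - 1} : Finset ℕ)
        (by intro y; simp; omega)
        (by intro i; have := hb3 i; simp; omega)
        (by intro i; have := hbβ i; have := hb3 i; simp; omega)
      by_cases h2 : β + 2 = k
      · have := pigeon_sdiff b hb (Finset.Icc 3 (k - 2)) ({β, β - 1} : Finset ℕ)
          (by intro y; simp; omega)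
          (by intro i; have := hb3 i; simp; omega)
          (by intro i; have := hbβ i; have := hb3 i; simp; omega)
        rw [Finset.card_pair (by omega)] at this
        simp at this
        omega
      · have := pigeon_sdiff b hb (Finset.Icc 3 (k - 2)) ({β, β + 1} : Finset ℕ)
          (by intro y; simp; omega)
          (by intro i; have := hb3 i; simp; omega)
          (by intro i; have := hbβ i; have := hb3 i; simp; omega)
        rw [Finset.card_pair (by omega)] at this
        simp at this
        omega
    · have := pigeon_sdiff b hb (Finset.Icc 1 (k - 1))
        ({α - 1, α, α + 1, β, β + 1} : Finset ℕ)
        (by intro y; simp; omega)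
        (by intro i; have := hb1 i; simp; omega)
        (by intro i; have := hbβ i; have := hbα i; simp; omega)
      have h5 : ({α - 1, α, α + 1, β, β + 1} : Finset ℕ).card = 5 := by
        repeat rw [Finset.card_insert_of_notMem (by simp; omega)]
        simp
      rw [h5] at this
      simp at this
      omega

/-- The explicit labelling of a copy of `H'` whose vertex `c` gets the label `p`. -/
def labH (k p : ℕ) : HpV k → ℕ
  | .c => p
  | .d => if p = 1 then k else 0
  | .e => if p = 1 then 0 else if p = k then k - 1 else k
  | .f j => j + 2
  | .g => if p = 1 then 0 else k
  | .h => if p = 1 then k else 0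
  | .i => if p = 1 then k - 1 else 1

/-- The explicit labelling of the gadget. -/
def labG (k α β t : ℕ) (p : Bool → ℕ) : GkV k → ℕ
  | .u => k
  | .v => k
  | .au => α
  | .av => β
  | .b i => i + t
  | .hp _ s x => labH k (p s) x

lemma fin_ne {n : ℕ} {i j : Fin n} (h : ¬ i = j) : (i : ℕ) ≠ j := fun h' => h (Fin.ext h')

set_option maxHeartbeats 4000000 in
lemma labG_ok {k : ℕ} (hk : 6 ≤ k) (α β t : ℕ) (p : Bool → ℕ)
    (ht2 : 2 ≤ t) (ht4 : t ≤ 4)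
    (hp : ∀ s, p s = 1 ∨ p s + 1 = k ∨ p s = k) (hpp : p false ≠ p true)
    (hpt : ∀ s (i : Fin (k - 5)), p s + 2 ≤ i + t ∨ i + t + 2 ≤ p s)
    (hα : α + 2 ≤ k) (hβ : β + 2 ≤ k) (hαβ : α + 2 ≤ β ∨ β + 2 ≤ α)
    (hpα : ∀ s, p s ≠ α) (hpβ : ∀ s, p s ≠ β)
    (hα' : ∀ i : Fin (k - 5), α + 2 ≤ i + t ∨ i + t + 2 ≤ α)
    (hβ' : ∀ i : Fin (k - 5), β + 2 ≤ i + t ∨ i + t + 2 ≤ β) :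
    IsL21Labelling (Gk k) k (labG k α β t p) := by
  have hpp' : ∀ s s', p s = p s' → s = s' := by
    rintro (_ | _) (_ | _) h
    · rfl
    · exact absurd h hpp
    · exact absurd h.symm hpp
    · rfl
  rw [l21_iff]
  refine ⟨?_, ?_, ?_⟩
  · rintro (_ | _ | _ | _ | i | ⟨i, s, (_ | _ | _ | j | _ | _ | _)⟩) <;> simp only [labG, labH]
    all_goals first
      | omega
      | (have := hp s; split_ifs <;> omega)
      | (have := hp s; omega)
  · have : ∀ x y, GkAdj k x y → labG k α β t p x + 2 ≤ labG k α β t p y ∨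
        labG k α β t p y + 2 ≤ labG k α β t p x := by
      rintro x y (⟨rfl, rfl⟩ | ⟨rfl, rfl⟩ | ⟨rfl, rfl⟩ | ⟨i, ⟨rfl, rfl⟩ | ⟨rfl, rfl⟩⟩ |
        ⟨i, s, rfl, rfl⟩ | ⟨i, s, x', y', rfl, rfl, (⟨rfl, rfl⟩ | ⟨rfl, rfl⟩ | ⟨rfl, rfl⟩ |
          ⟨rfl, rfl⟩ | ⟨j, ⟨rfl, rfl⟩ | ⟨rfl, rfl⟩⟩)⟩) <;> simp only [labG, labH]
      · omega
      · omega
      · omega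
      · exact hα' i
      · exact hβ' i
      · exact (hpt s i).symm
      all_goals (have := hp s; split_ifs <;> omega)
    intro x y h
    rw [Gk, SimpleGraph.fromRel_adj] at h
    rcases h.2 with h | h
    · exact this _ _ h
    · exact (this _ _ h).symm
  · intro x z y hx hy hne
    rw [Gk, SimpleGraph.fromRel_adj] at hx hy
    obtain ⟨-, hx⟩ := hx
    obtain ⟨-, hy⟩ := hy
    rcases z with (_ | _ | _ | _ | i | ⟨i, s, (_ | _ | _ | j | _ | _ | _)⟩) <;>
    rcases x with (_ | _ | _ | _ | i' | ⟨i', s', (_ | _ | _ | j' | _ | _ | _)⟩) <;>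
    simp [GkAdj, HpAdj] at hx <;>
    rcases y with (_ | _ | _ | _ | i'' | ⟨i'', s'', (_ | _ | _ | j'' | _ | _ | _)⟩) <;>
    simp [GkAdj, HpAdj] at hy <;>
    simp at hne <;>
    simp only [labG, labH] <;>
    grind

theorem stmt_11 (k : ℕ) (hk : 6 ≤ k) (α β : ℕ) (hα : α ≤ k) (hβ : β ≤ k) :
    (∃ L : GkV k → ℕ, IsL21Labelling (Gk k) k L ∧
      L GkV.u = k ∧ L GkV.v = k ∧ L GkV.au = α ∧ L GkV.av = β) ↔
    (α, β) ∈ ({(2,0),(0,2),(k-2,0),(0,k-2)} : Set (ℕ × ℕ)) := by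
  constructor
  · rintro ⟨L, hL, hu, hv, hau, hav⟩
    rw [l21_iff] at hL
    obtain ⟨hB, hA, hD⟩ := hL
    have adj : ∀ x y, GkAdj k x y → x ≠ y → (Gk k).Adj x y := fun x y h hne => by
      rw [Gk, SimpleGraph.fromRel_adj]; exact ⟨hne, Or.inl h⟩
    have e1 : (Gk k).Adj .u .au := adj _ _ (by simp [GkAdj]) (by simp)
    have e2 : (Gk k).Adj .au .av := adj _ _ (by simp [GkAdj]) (by simp)
    have e3 : (Gk k).Adj .av .v := adj _ _ (by simp [GkAdj]) (by simp)
    have e4 : ∀ i, (Gk k).Adj .au (.b i) := fun i => adj _ _ (by simp [GkAdj]) (by simp)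
    have e5 : ∀ i, (Gk k).Adj .av (.b i) := fun i => adj _ _ (by simp [GkAdj]) (by simp)
    have e6 : ∀ i s, (Gk k).Adj (.b i) (.hp i s .c) :=
      fun i s => adj _ _ (by simp [GkAdj]) (by simp)
    have e7 : ∀ i s, (Gk k).Adj (.hp i s .c) (.hp i s .d) :=
      fun i s => adj _ _ (by simp [GkAdj, HpAdj]) (by simp)
    have e8 : ∀ i s, (Gk k).Adj (.hp i s .d) (.hp i s .e) :=
      fun i s => adj _ _ (by simp [GkAdj, HpAdj]) (by simp)
    have e9 : ∀ i s, (Gk k).Adj (.hp i s .g) (.hp i s .h) :=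
      fun i s => adj _ _ (by simp [GkAdj, HpAdj]) (by simp)
    have e10 : ∀ i s, (Gk k).Adj (.hp i s .g) (.hp i s .i) :=
      fun i s => adj _ _ (by simp [GkAdj, HpAdj]) (by simp)
    have e11 : ∀ i s j, (Gk k).Adj (.hp i s .d) (.hp i s (.f j)) :=
      fun i s j => adj _ _ (by simp [GkAdj, HpAdj]) (by simp)
    have e12 : ∀ i s j, (Gk k).Adj (.hp i s .g) (.hp i s (.f j)) :=
      fun i s j => adj _ _ (by simp [GkAdj, HpAdj]) (by simp)
    have hf : ∀ i s, Function.Injective fun j => L (.hp i s (.f j)) := by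
      intro i s j j' h
      by_contra hne
      exact hD _ _ _ (e11 i s j) (e11 i s j') (by simpa using hne) h
    have hd : ∀ i s, L (.hp i s .d) = 0 ∨ L (.hp i s .d) = k := fun i s =>
      hub hk _ (hf i s) (L (.hp i s .c)) (L (.hp i s .e)) _
        (hD _ _ _ (e7 i s).symm (e8 i s) (by simp))
        (fun j => hD _ _ _ (e11 i s j) (e7 i s).symm (by simp))
        (fun j => hD _ _ _ (e11 i s j) (e8 i s) (by simp))
        (hB _) (hB _) (hB _) (fun _ => hB _) (hA _ _ (e7 i s).symm) (hA _ _ (e8 i s))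
        (fun j => hA _ _ (e11 i s j))
    have hg : ∀ i s, L (.hp i s .g) = 0 ∨ L (.hp i s .g) = k := fun i s =>
      hub hk _ (hf i s) (L (.hp i s .h)) (L (.hp i s .i)) _
        (hD _ _ _ (e9 i s) (e10 i s) (by simp))
        (fun j => hD _ _ _ (e12 i s j) (e9 i s) (by simp))
        (fun j => hD _ _ _ (e12 i s j) (e10 i s) (by simp))
        (hB _) (hB _) (hB _) (fun _ => hB _) (hA _ _ (e9 i s)) (hA _ _ (e10 i s))
        (fun j => hA _ _ (e12 i s j))
    have hdg : ∀ i s, L (.hp i s .d) ≠ L (.hp i s .g) := fun i s =>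
      hD _ _ _ (e11 i s ⟨0, by omega⟩).symm (e12 i s ⟨0, by omega⟩).symm (by simp)
    have hc : ∀ i s, L (.hp i s .c) < 2 ∨ k < L (.hp i s .c) + 2 := fun i s =>
      mid hk _ (hf i s) _ (fun j => hD _ _ _ (e11 i s j) (e7 i s).symm (by simp))
        (fun j => by
          have := hA _ _ (e11 i s j); have := hA _ _ (e12 i s j)
          have := hB (.hp i s (.f j)); have := hd i s; have := hg i s; have := hdg i s
          omega)
    have hb : Function.Injective fun i => L (.b i) := by
      intro i j h
      by_contra hne
      exact hD _ _ _ (e4 i) (e4 j) (by simpa using hne) h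
    have hb1 : ∀ i, 1 ≤ L (.b i) ∧ L (.b i) + 1 ≤ k := by
      intro i
      have := hc i true
      have := hd i true
      have := hA _ _ (e6 i true)
      have := hA _ _ (e7 i true)
      have := hB (.b i)
      have := hB (.hp i true .c)
      have := hD _ _ _ (e6 i true).symm (e7 i true) (by simp)
      omega
    have ha := hA _ _ e1
    have ha' := hA _ _ e2
    have ha'' := hA _ _ e3
    have hcc : ∀ i, L (.hp i false .c) ≠ L (.hp i true .c) := fun i =>
      hD _ _ _ (e6 i false) (e6 i true) (by simp)
    rw [hu, hau] at ha
    rw [hau, hav] at ha'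
    rw [hv, hav] at ha''
    have q1 : ∀ i, L (.b i) + 2 ≤ α ∨ α + 2 ≤ L (.b i) := fun i => hau ▸ hA _ _ (e4 i).symm
    have q2 : ∀ i, L (.b i) + 2 ≤ β ∨ β + 2 ≤ L (.b i) := fun i => hav ▸ hA _ _ (e5 i).symm
    have q3 : ∀ i s, L (.hp i s .c) ≠ α := fun i s =>
      hau ▸ hD _ _ _ (e6 i s) (e4 i).symm (by simp)
    have q4 : ∀ i s, L (.hp i s .c) ≠ β := fun i s =>
      hav ▸ hD _ _ _ (e6 i s) (e5 i).symm (by simp)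
    have r : (α = 0 ∧ (β = 2 ∨ β + 2 = k)) ∨ (β = 0 ∧ (α = 2 ∨ α + 2 = k)) := by
      rcases ha' with h | h
      · left
        exact core hk α β (fun i => L (.b i)) hb (fun i s => L (.hp i s .c)) h (by omega) hb1
          q1 q2 hcc (fun i s => by have := hc i s; omega) (fun _ _ => hB _) q3
          (fun i s => hA _ _ (e6 i s))
      · right
        exact core hk β α (fun i => L (.b i)) hb (fun i s => L (.hp i s .c)) h (by omega) hb1
          q2 q1 hcc (fun i s => by have := hc i s; omega) (fun _ _ => hB _) q4
          (fun i s => hA _ _ (e6 i s))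
    simp only [Set.mem_insert_iff, Set.mem_singleton_iff, Prod.mk.injEq]
    omega
  · intro h
    simp only [Set.mem_insert_iff, Set.mem_singleton_iff, Prod.mk.injEq] at h
    have h' : ((α = 0 ∧ β = 2) ∨ (α = 2 ∧ β = 0)) ∨
      ((α = 0 ∧ β = k - 2) ∨ (α = k - 2 ∧ β = 0)) := by omega
    rcases h' with h' | h'
    · refine ⟨labG k α β 4 (fun s => if s then 1 else k), ?_, rfl, rfl, rfl, rfl⟩
      apply labG_ok hk <;> first | omega | (rintro (_ | _) <;> simp <;> omega) | (simp; omega)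
    · refine ⟨labG k α β 2 (fun s => if s then k - 1 else k), ?_, rfl, rfl, rfl, rfl⟩
      apply labG_ok hk <;> first | omega | (rintro (_ | _) <;> simp <;> omega) | (simp; omega)
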